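/- For all n ≥ 1, the number of lattice points in the relative interior of P_n(132,312) (its interior within its affine span) equals the number of derangements of an (n−1)-element set; that is, |relint(P_n(132,312)) ∩ ℤ^n| = #{τ ∈ S_{n−1} : τ(i) ≠ i for all i}. -/

import Mathlib

open Pointwise

/-- `σ` contains the pattern `π`. -/
def containsPattern {n k : ℕ} (σ : Equiv.Perm (Fin n)) (π : Equiv.Perm (Fin k)) : Prop :=
  ∃ f : Fin k → Fin n, StrictMono f ∧ ∀ a b : Fin k, σ (f a) < σ (f b) ↔ π a < π b

/-- The pattern 132. -/
def p132 : Equiv.Perm (Fin 3) := Equiv.swap 1 2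
/-- The pattern 312. -/
def p312 : Equiv.Perm (Fin 3) := (finRotate 3)⁻¹

/-- The point `(σ(1), …, σ(n)) ∈ ℝ^n` (one-based values). -/
def permPoint {n : ℕ} (σ : Equiv.Perm (Fin n)) : Fin n → ℝ := fun i => ((σ i : ℕ) : ℝ) + 1

/-- The polytope `P_n(132,312)`. -/
def P132312 (n : ℕ) : Set (Fin n → ℝ) :=
  convexHull ℝ (permPoint ''
    {σ : Equiv.Perm (Fin n) | ¬ containsPattern σ p132 ∧ ¬ containsPattern σ p312})

/-!
A permutation avoids 132 and 312 exactly when each of its entries is a left-to-right maximum or a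
left-to-right minimum. The entries are affine functions of the indicator vector `e` of the maxima,
so `P_n(132,312)` is an affine image of the cube `[0,1]^n` and its relative interior is the image of
the open cube.

Let `g k` be the sum of the first `k + 1` entries of `(n, n - 1, …, 1) - x`. If `x` is the image of
`e`, then `g k / (k + 1)` is the tail sum of the `e i` with `i > k`. Hence the interior integer
points correspond to the integer sequences `g 0, …, g (n - 1)` for which `g k / (k + 1)` decreases
to `0` by steps in `(0, 1)`. Removing the last term `b` of such a sequence of length `m + 2` leaves
`m` choices of the previous term not divisible by `m + 1`, and one divisible choice unless `m + 2`
divides `b`. So the number of sequences depends only on this divisibility, and the recursion is that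
of the derangement numbers.
-/

section IntrinsicInterior

variable {E V : Type*} [NormedAddCommGroup E] [NormedSpace ℝ E] [NormedAddCommGroup V]
  [NormedSpace ℝ V] {s : Set E}

theorem image_interior_subset_intrinsicInterior [FiniteDimensional ℝ V] (f : E →ᵃ[ℝ] V)
    (hs : (interior s).Nonempty) : f '' interior s ⊆ intrinsicInterior ℝ (f '' s) := by
  have : Nonempty (affineSpan ℝ (f '' s)) :=
    ((hs.mono interior_subset).image f).affineSpan ℝ |>.to_subtype
  have hspan : (⊤ : AffineSubspace ℝ E).map f = affineSpan ℝ (f '' s) := by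
    rw [← AffineSubspace.map_span, eq_top_mono (affineSpan_mono ℝ interior_subset)
      (isOpen_interior.affineSpan_eq_top hs)]
  let r := f.restrict hspan.le
  have hr : IsOpenMap r := AffineMap.isOpenMap_linear_iff.1 <|
    r.linear.isOpenMap_of_finiteDimensional <| r.linear_surjective_iff.2 <|
      AffineMap.restrict.surjective f hspan
  rintro _ ⟨x, hx, rfl⟩
  refine ⟨r ⟨x, trivial⟩, interior_maximal ?_
    (hr _ (isOpen_interior.preimage continuous_subtype_val)) ⟨⟨x, trivial⟩, hx, rfl⟩, rfl⟩
  rintro _ ⟨⟨z, _⟩, hz, rfl⟩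
  exact ⟨z, interior_subset hz, rfl⟩

theorem exists_lineMap_mem_of_mem_intrinsicInterior {t : Set V} {z y : V} (hz : z ∈ t)
    (hy : y ∈ intrinsicInterior ℝ t) : ∃ c : ℝ, 1 < c ∧ AffineMap.lineMap z y c ∈ t := by
  obtain ⟨y, hy, rfl⟩ := hy
  let z' : affineSpan ℝ t := ⟨z, subset_affineSpan ℝ t hz⟩
  have : Nonempty (affineSpan ℝ t) := ⟨z'⟩
  have hcont : Filter.Tendsto (AffineMap.lineMap z' y) (nhdsWithin (1 : ℝ) (Set.Ioi 1))
      (nhds y) := by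
    have : Continuous (AffineMap.lineMap z' y : ℝ → affineSpan ℝ t) := by fun_prop
    simpa using this.continuousWithinAt.tendsto (x := (1 : ℝ)) (s := Set.Ioi 1)
  obtain ⟨c, hc, hc1⟩ := ((hcont.eventually (mem_interior_iff_mem_nhds.1 hy)).and
    self_mem_nhdsWithin).exists
  refine ⟨c, hc1, ?_⟩
  simpa [z', AffineMap.lineMap_apply] using hc

theorem intrinsicInterior_image_of_convex [FiniteDimensional ℝ V] (f : E →ᵃ[ℝ] V)
    (hconv : Convex ℝ s) (hs : (interior s).Nonempty) :
    intrinsicInterior ℝ (f '' s) = f '' interior s := by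
  refine Set.Subset.antisymm (fun y hy => ?_) (image_interior_subset_intrinsicInterior f hs)
  obtain ⟨x₀, hx₀⟩ := hs
  obtain ⟨c, hc, x, hx, hxc⟩ := exists_lineMap_mem_of_mem_intrinsicInterior
    (Set.mem_image_of_mem f (interior_subset hx₀)) hy
  have hc0 : 0 < c := one_pos.trans hc
  refine ⟨AffineMap.lineMap x₀ x c⁻¹, ?_, ?_⟩
  · exact hconv.openSegment_interior_self_subset_interior hx₀ hx
      (lineMap_mem_openSegment ℝ x₀ x ⟨inv_pos.2 hc0, inv_lt_one_of_one_lt₀ hc⟩)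
  · rw [AffineMap.apply_lineMap, hxc, AffineMap.lineMap_lineMap_right, inv_mul_cancel₀ hc0.ne',
      AffineMap.lineMap_apply_one]

end IntrinsicInterior

section Records

variable {n k : ℕ}

theorem strictMono_fin_three {α : Type*} [Preorder α] {f : Fin 3 → α} :
    StrictMono f ↔ f 0 < f 1 ∧ f 1 < f 2 := by
  rw [Fin.strictMono_iff_lt_succ, Fin.forall_fin_two]
  rfl

theorem containsPattern_iff_strictMono {σ : Equiv.Perm (Fin n)} {π : Equiv.Perm (Fin k)} :
    containsPattern σ π ↔ ∃ f : Fin k → Fin n, StrictMono f ∧ StrictMono (σ ∘ f ∘ π.symm) := by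
  refine exists_congr fun f => and_congr_right fun _ => ⟨fun h a b hab => ?_, fun h a b => ?_⟩
  · simpa [h] using hab
  · simpa using h.lt_iff_lt (a := π a) (b := π b)

theorem containsPattern_p132_iff {σ : Equiv.Perm (Fin n)} : containsPattern σ p132 ↔
    ∃ i j l, i < j ∧ j < l ∧ σ i < σ l ∧ σ l < σ j := by
  have h0 : p132.symm 0 = 0 := by decide
  have h1 : p132.symm 1 = 2 := by decide
  have h2 : p132.symm 2 = 1 := by decide
  simp only [containsPattern_iff_strictMono, strictMono_fin_three, Function.comp_apply, h0, h1, h2,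
    and_assoc]
  exact ⟨fun ⟨f, hf⟩ => ⟨f 0, f 1, f 2, hf⟩, fun ⟨i, j, l, h⟩ => ⟨![i, j, l], h⟩⟩

theorem containsPattern_p312_iff {σ : Equiv.Perm (Fin n)} : containsPattern σ p312 ↔
    ∃ i j l, i < j ∧ j < l ∧ σ j < σ l ∧ σ l < σ i := by
  have h0 : p312.symm 0 = 1 := by decide
  have h1 : p312.symm 1 = 2 := by decide
  have h2 : p312.symm 2 = 0 := by decide
  simp only [containsPattern_iff_strictMono, strictMono_fin_three, Function.comp_apply, h0, h1, h2,
    and_assoc]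
  exact ⟨fun ⟨f, hf⟩ => ⟨f 0, f 1, f 2, hf⟩, fun ⟨i, j, l, h⟩ => ⟨![i, j, l], h⟩⟩

theorem avoids_p132_p312_iff (σ : Equiv.Perm (Fin n)) :
    ¬ containsPattern σ p132 ∧ ¬ containsPattern σ p312 ↔
      ∀ j, (∀ i < j, σ i < σ j) ∨ ∀ i < j, σ j < σ i := by
  rw [containsPattern_p132_iff, containsPattern_p312_iff]
  constructor
  · rintro ⟨h132, h312⟩ j
    by_contra! ⟨⟨i, hij, hi⟩, ⟨i', hij', hi'⟩⟩
    replace hi := hi.lt_of_ne (σ.injective.ne hij.ne')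
    replace hi' := hi'.lt_of_ne (σ.injective.ne hij'.ne)
    rcases lt_trichotomy i i' with h | rfl | h
    · exact h312 ⟨i, i', j, h, hij', hi', hi⟩
    · exact hi.asymm hi'
    · exact h132 ⟨i', i, j, h, hij, hi', hi⟩
  · intro h
    constructor
    · rintro ⟨i, j, l, hij, hjl, hil, hlj⟩
      exact (h l).elim (fun h => hlj.asymm (h j hjl)) fun h => hil.asymm (h i (hij.trans hjl))
    · rintro ⟨i, j, l, hij, hjl, hjl', hli⟩
      exact (h l).elim (fun h => hli.asymm (h i (hij.trans hjl))) fun h => hjl'.asymm (h j hjl)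

/-- `e` records which entries of `σ` are left-to-right maxima (`1`) and which are left-to-right
minima (`0`), every entry being one or the other. The first entry is both, and `e 0` is
unconstrained. -/
def IsRecordVector (σ : Equiv.Perm (Fin n)) (e : Fin n → ℝ) : Prop :=
  ∀ i j, i < j → e j = if σ i < σ j then 1 else 0

theorem exists_isRecordVector_iff {σ : Equiv.Perm (Fin n)} :
    (∃ e ∈ Set.univ.pi fun _ => ({0, 1} : Set ℝ), IsRecordVector σ e) ↔
      ∀ j, (∀ i < j, σ i < σ j) ∨ ∀ i < j, σ j < σ i := by
  constructor
  · rintro ⟨e, he, hσ⟩ j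
    rcases he j trivial with hj | hj
    · refine Or.inr fun i hij => (σ.injective.ne hij.ne').lt_of_le (not_lt.1 fun hlt => ?_)
      simpa [hj, hlt] using hσ i j hij
    · refine Or.inl fun i hij => by_contra fun hlt => ?_
      simpa [Set.mem_singleton_iff.1 hj, hlt] using hσ i j hij
  · intro h
    classical
    refine ⟨fun j => if ∀ i < j, σ i < σ j then 1 else 0, fun j _ => ?_, fun i j hij => ?_⟩
    · dsimp only
      split_ifs <;> simp
    · refine if_congr ⟨fun hj => hj i hij, fun hij' => ?_⟩ rfl rfl
      exact (h j).resolve_right fun hj => hij'.asymm (hj i hij)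

theorem exists_perm_lt_iff_lt {α : Type*} [LinearOrder α] {v : Fin n → α}
    (hv : Function.Injective v) : ∃ σ : Equiv.Perm (Fin n), ∀ i j, σ i < σ j ↔ v i < v j := by
  have hsort : StrictMono (v ∘ Tuple.sort v) :=
    (Tuple.monotone_sort v).strictMono_of_injective (hv.comp (Tuple.sort v).injective)
  refine ⟨(Tuple.sort v).symm, fun i j => ?_⟩
  simpa using (hsort.lt_iff_lt (a := (Tuple.sort v).symm i) (b := (Tuple.sort v).symm j)).symm

theorem exists_perm_isRecordVector {e : Fin n → ℝ}
    (he : e ∈ Set.univ.pi fun _ => ({0, 1} : Set ℝ)) :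
    ∃ σ : Equiv.Perm (Fin n), IsRecordVector σ e := by
  -- `|v|` increases, so the sign of `v j` puts it above or below all earlier values.
  let v : Fin n → ℤ := fun j => if e j = 1 then j else -j
  have hv_abs (j : Fin n) : |v j| = j := by
    simp only [v]
    split_ifs <;> simp
  have hv : Function.Injective v := fun i j hij => by
    have := congrArg abs hij
    rw [hv_abs, hv_abs] at this
    exact Fin.ext (by exact_mod_cast this)
  obtain ⟨σ, hσ⟩ := exists_perm_lt_iff_lt hv
  refine ⟨σ, fun i j hij => ?_⟩
  have hlt : |v i| < j := by
    rw [hv_abs]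
    exact_mod_cast hij
  rw [abs_lt] at hlt
  simp only [hσ]
  rcases he j trivial with hj | hj
  · have hvj : v j = -j := by simp [v, hj]
    rw [hj, if_neg (by omega)]
  · have hvj : v j = j := by simp [v, Set.mem_singleton_iff.1 hj]
    rw [if_pos (by omega), Set.mem_singleton_iff.1 hj]

theorem card_filter_perm_lt (σ : Equiv.Perm (Fin n)) (j : Fin n) :
    (Finset.univ.filter fun i => σ i < σ j).card = σ j := by
  rw [← Fin.card_Iio, ← Finset.card_map σ.toEmbedding]
  congr 1
  ext a
  simp

/-- The affine map from the cube onto `P_n(132,312)`, sending the record vector of an avoider `σ` to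
`permPoint σ`. The entry of `σ` at `j` exceeds `j * e j` earlier entries, together with the later
entries at those `i` for which `e i = 0`. The value does not depend on `e 0`. -/
def recordMap (n : ℕ) : (Fin n → ℝ) →ᵃ[ℝ] (Fin n → ℝ) where
  toFun e j := n - j + j * e j - ∑ i ∈ Finset.Ioi j, e i
  linear := LinearMap.pi fun j =>
    (j : ℝ) • LinearMap.proj j - ∑ i ∈ Finset.Ioi j, LinearMap.proj i
  map_vadd' e v := by
    ext j
    simp only [Pi.vadd_apply', vadd_eq_add, Finset.sum_add_distrib, LinearMap.pi_apply,
      LinearMap.sub_apply, LinearMap.smul_apply, LinearMap.coe_proj, Function.eval, smul_eq_mul,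
      LinearMap.coe_sum, Finset.sum_apply]
    ring

theorem recordMap_apply (e : Fin n → ℝ) (j : Fin n) :
    recordMap n e j = n - j + j * e j - ∑ i ∈ Finset.Ioi j, e i := rfl

theorem permPoint_apply_eq_sum (σ : Equiv.Perm (Fin n)) (j : Fin n) :
    permPoint σ j = 1 + ∑ i, if σ i < σ j then 1 else 0 := by
  rw [Finset.sum_boole, card_filter_perm_lt, permPoint, add_comm]

theorem IsRecordVector.permPoint_eq {σ : Equiv.Perm (Fin n)} {e : Fin n → ℝ}
    (h : IsRecordVector σ e) : permPoint σ = recordMap n e := by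
  ext j
  have hbefore : ∑ i ∈ Finset.Iio j, (if σ i < σ j then (1 : ℝ) else 0) = j * e j := by
    rw [Finset.sum_congr rfl fun i hi => (h i j (Finset.mem_Iio.1 hi)).symm]
    simp
  have hafter : ∑ i ∈ Finset.Ioi j, (if σ i < σ j then (1 : ℝ) else 0) =
      ∑ i ∈ Finset.Ioi j, (1 - e i) := by
    refine Finset.sum_congr rfl fun i hi => ?_
    rw [h j i (Finset.mem_Ioi.1 hi)]
    rcases (σ.injective.ne (Finset.mem_Ioi.1 hi).ne).lt_or_gt with hji | hij
    · rw [if_neg hji.asymm, if_pos hji, sub_self]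
    · rw [if_pos hij, if_neg hij.asymm, sub_zero]
  have hcard : ((Finset.Ioi j).card : ℝ) = n - 1 - j := by
    rw [Fin.card_Ioi, Nat.sub_sub, Nat.cast_sub (by omega)]
    push_cast
    ring
  rw [permPoint_apply_eq_sum, Fintype.sum_eq_add_sum_compl j, ← Finset.Ioi_disjUnion_Iio,
    Finset.sum_disjUnion, hbefore, hafter, Finset.sum_sub_distrib, Finset.sum_const, nsmul_one,
    hcard, recordMap_apply, if_neg (lt_irrefl _)]
  ring

theorem image_permPoint_avoiders (n : ℕ) :
    permPoint '' {σ : Equiv.Perm (Fin n) | ¬ containsPattern σ p132 ∧ ¬ containsPattern σ p312} =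
      recordMap n '' Set.univ.pi fun _ => {0, 1} := by
  ext x
  simp only [avoids_p132_p312_iff, ← exists_isRecordVector_iff]
  constructor
  · rintro ⟨σ, ⟨e, he, hσ⟩, rfl⟩
    exact ⟨e, he, hσ.permPoint_eq.symm⟩
  · rintro ⟨e, he, rfl⟩
    obtain ⟨σ, hσ⟩ := exists_perm_isRecordVector he
    exact ⟨σ, ⟨e, he, hσ⟩, hσ.permPoint_eq⟩

theorem P132312_eq_image (n : ℕ) :
    P132312 n = recordMap n '' Set.univ.pi fun _ => Set.Icc 0 1 := by
  rw [P132312, image_permPoint_avoiders, ← AffineMap.image_convexHull, convexHull_pi]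
  simp [convexHull_pair, segment_eq_Icc]

end Records

section SlopeChains

/-- Sequences `g 0, …, g m` with `g m = b` along which the ratio `g k / (k + 1)` decreases at each
step by an amount strictly between `0` and `1`. Denominators are cleared, so that the notion makes
sense over `ℤ`. -/
def slopeChains (R : Type*) [Semiring R] [Preorder R] (m : ℕ) (b : R) : Set (Fin (m + 1) → R) :=
  {g | g (Fin.last m) = b ∧ ∀ i : Fin m, (i + 2) * g i.castSucc ∈
    Set.Ioo ((i + 1) * g i.succ) ((i + 1) * g i.succ + (i + 1) * (i + 2))}

/-- The integers `c` that can precede a final value `b` in a slope chain of length `m + 2`, that is,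
those with `b / (m + 2) < c / (m + 1) < b / (m + 2) + 1`. The upper bound is a ceiling, written with
the floor division of `ℤ`. -/
noncomputable def stepSources (m : ℕ) (b : ℤ) : Finset ℤ :=
  Finset.Ioo ((m + 1) * b / (m + 2)) (-(-((m + 1) * b) / (m + 2)) + (m + 1))

theorem mem_stepSources {m : ℕ} {b c : ℤ} : c ∈ stepSources m b ↔
    (m + 2) * c ∈ Set.Ioo ((m + 1) * b) ((m + 1) * b + (m + 1) * (m + 2)) := by
  have h : (0 : ℤ) < m + 2 := by positivity
  have hlt : c < -(-((m + 1) * b) / (m + 2)) + (m + 1) ↔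
      -((m + 1) * b) / (m + 2) < m + 1 - c := by
    constructor <;> intro <;> linarith
  rw [stepSources, Finset.mem_Ioo, hlt, Int.ediv_lt_iff_lt_mul h, Int.ediv_lt_iff_lt_mul h,
    Set.mem_Ioo]
  constructor <;> rintro ⟨h₁, h₂⟩ <;> constructor <;> linarith

theorem snoc_mem_slopeChains_iff {m : ℕ} {b : ℤ} {f : Fin (m + 1) → ℤ} :
    (Fin.snoc f b : Fin (m + 2) → ℤ) ∈ slopeChains ℤ (m + 1) b ↔
      ∃ c ∈ stepSources m b, f ∈ slopeChains ℤ m c := by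
  simp only [slopeChains, Set.mem_ofPred_eq, Fin.forall_fin_succ', mem_stepSources]
  -- Every index inside the chain has to appear as a `castSucc` for `Fin.snoc_castSucc` to apply.
  simp [-Fin.castSucc_succ, ← Fin.castSucc_succ, Fin.succ_last, and_comm]

theorem slopeChains_succ (m : ℕ) (b : ℤ) : slopeChains ℤ (m + 1) b =
    ⋃ c ∈ stepSources m b, (Fin.snoc · b) '' slopeChains ℤ m c := by
  ext g
  simp only [Set.mem_iUnion, Set.mem_image, exists_prop]
  constructor
  · intro hg
    have hlast : Fin.snoc (Fin.init g) b = g := by rw [← hg.1, Fin.snoc_init_self]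
    obtain ⟨c, hc, hf⟩ := snoc_mem_slopeChains_iff.1 (hlast.symm ▸ hg)
    exact ⟨c, hc, _, hf, hlast⟩
  · rintro ⟨c, hc, f, hf, rfl⟩
    exact snoc_mem_slopeChains_iff.2 ⟨c, hc, hf⟩

theorem encard_slopeChains_succ (m : ℕ) (b : ℤ) : (slopeChains ℤ (m + 1) b).encard =
    ∑ c ∈ stepSources m b, (slopeChains ℤ m c).encard := by
  have hdisj : (stepSources m b : Set ℤ).PairwiseDisjoint
      fun c => (Fin.snoc · b : _ → Fin (m + 2) → ℤ) '' slopeChains ℤ m c := by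
    intro c _ d _ hcd
    refine Set.disjoint_left.2 ?_
    rintro _ ⟨f, hf, rfl⟩ ⟨g, hg, hgf⟩
    obtain rfl : g = f := Fin.snoc_left_injective _ hgf
    exact hcd (hf.1.symm.trans hg.1)
  have := (stepSources m b).finite_toSet.encard_biUnion hdisj
  simp only [Finset.mem_coe] at this
  rw [slopeChains_succ, this, finsum_mem_finset_eq_sum]
  exact Finset.sum_congr rfl fun c _ => (Fin.snoc_left_injective (α := fun _ => ℤ) b).encard_image _

theorem filter_dvd_Ioo (k t : ℤ) :
    (Finset.Ioo (k * t) (k * t + k)).filter (k ∣ ·) = ∅ := by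
  rw [Finset.filter_eq_empty_iff]
  rintro c hc ⟨d, rfl⟩
  rw [Finset.mem_Ioo, ← mul_add_one] at hc
  have hk : 0 ≤ k := by nlinarith
  have h₁ := lt_of_mul_lt_mul_left hc.1 hk
  have h₂ := lt_of_mul_lt_mul_left hc.2 hk
  omega

theorem card_filter_dvd_Ioc {k : ℤ} (hk : 0 < k) (a : ℤ) :
    ((Finset.Ioc a (a + k)).filter (k ∣ ·)).card = 1 := by
  have hk' : (k : ℚ) ≠ 0 := by exact_mod_cast hk.ne'
  have := Int.Ioc_filter_dvd_card a (a + k) hk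
  rw [Int.cast_add, add_div, div_self hk', Int.floor_add_one] at this
  simpa using this

theorem numDerangements_succ_eq_mul (m : ℕ) :
    numDerangements (m + 1) = m * (numDerangements m + numDerangements (m - 1)) := by
  cases m with
  | zero => simp
  | succ k => rw [numDerangements_add_two, Nat.add_sub_cancel, add_comm (numDerangements k)]

theorem stepSources_of_dvd {m : ℕ} {b : ℤ} (h : (m + 2 : ℤ) ∣ b) :
    ∃ t : ℤ, stepSources m b = Finset.Ioo ((m + 1) * t) ((m + 1) * t + (m + 1)) := by
  obtain ⟨t, rfl⟩ := h
  have hne : (m + 2 : ℤ) ≠ 0 := by positivity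
  refine ⟨t, ?_⟩
  rw [stepSources, mul_left_comm, ← mul_neg, Int.mul_ediv_cancel_left _ hne,
    Int.mul_ediv_cancel_left _ hne, neg_neg]

theorem stepSources_of_not_dvd {m : ℕ} {b : ℤ} (h : ¬ (m + 2 : ℤ) ∣ b) :
    ∃ q : ℤ, stepSources m b = Finset.Ioc q (q + (m + 1)) := by
  have hb : ¬ (m + 2 : ℤ) ∣ (m + 1) * b := fun hdvd => h <| by
    have := dvd_sub (dvd_mul_right (m + 2 : ℤ) b) hdvd
    rwa [← sub_mul, add_sub_add_left_eq_sub, show (2 - 1 : ℤ) = 1 from rfl, one_mul] at this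
  have hpos : (0 : ℤ) < m + 2 := by positivity
  have hceil : -(-((m + 1) * b) / (m + 2)) = (m + 1) * b / (m + 2) + 1 := by
    rw [Int.neg_ediv, if_neg hb, Int.sign_eq_one_of_pos hpos]
    ring
  refine ⟨(m + 1) * b / (m + 2), ?_⟩
  ext c
  rw [stepSources, hceil, Finset.mem_Ioo, Finset.mem_Ioc]
  omega

theorem card_filter_dvd_stepSources (m : ℕ) (b : ℤ) :
    ((stepSources m b).filter ((m + 1 : ℤ) ∣ ·)).card = if (m + 2 : ℤ) ∣ b then 0 else 1 := by
  split_ifs with hb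
  · obtain ⟨t, ht⟩ := stepSources_of_dvd hb
    rw [ht, filter_dvd_Ioo, Finset.card_empty]
  · obtain ⟨q, hq⟩ := stepSources_of_not_dvd hb
    rw [hq, card_filter_dvd_Ioc (by positivity)]

theorem card_filter_not_dvd_stepSources (m : ℕ) (b : ℤ) :
    ((stepSources m b).filter (¬ (m + 1 : ℤ) ∣ ·)).card = m := by
  have hcard : (stepSources m b).card = m + if (m + 2 : ℤ) ∣ b then 0 else 1 := by
    split_ifs with hb
    · obtain ⟨t, ht⟩ := stepSources_of_dvd hb
      rw [ht, Int.card_Ioo]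
      omega
    · obtain ⟨q, hq⟩ := stepSources_of_not_dvd hb
      rw [hq, Int.card_Ioc]
      omega
  have hsplit := Finset.card_filter_add_card_filter_not (s := stepSources m b) ((m + 1 : ℤ) ∣ ·)
  rw [card_filter_dvd_stepSources, hcard] at hsplit
  omega

-- No integer meets the second case when `m = 0`, so the truncated `m - 1` is harmless.
theorem encard_slopeChains (m : ℕ) (b : ℤ) : (slopeChains ℤ m b).encard =
    (if (m + 1 : ℤ) ∣ b then numDerangements m
      else numDerangements m + numDerangements (m - 1) : ℕ) := by
  induction m generalizing b with
  | zero =>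
    have hsingleton : slopeChains ℤ 0 b = {fun _ => b} := by
      ext g
      simp [slopeChains, funext_iff]
    simp [hsingleton]
  | succ m ih =>
    simp only [encard_slopeChains_succ, ih]
    rw [← Nat.cast_sum, Finset.sum_ite, Finset.sum_const, Finset.sum_const,
      card_filter_dvd_stepSources, card_filter_not_dvd_stepSources, smul_eq_mul, smul_eq_mul,
      ← numDerangements_succ_eq_mul, Nat.cast_succ, add_assoc, one_add_one_eq_two]
    split_ifs <;> simp [add_comm]

end SlopeChains

section PrefixSum

variable {A : Type*} {m : ℕ}

theorem sum_Iic_zero [AddCommMonoid A] (y : Fin (m + 1) → A) : ∑ j ∈ Finset.Iic 0, y j = y 0 := by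
  rw [← bot_eq_zero (α := Fin (m + 1)), Finset.Iic_bot, Finset.sum_singleton]

theorem sum_Iic_succ [AddCommMonoid A] (y : Fin (m + 1) → A) (i : Fin m) :
    ∑ j ∈ Finset.Iic i.succ, y j = ∑ j ∈ Finset.Iic i.castSucc, y j + y i.succ := by
  have : Finset.Iio i.succ = Finset.Iic i.castSucc := by
    ext j
    rw [Finset.mem_Iio, Finset.mem_Iic, Fin.le_castSucc_iff]
  rw [← Finset.sum_Iio_add_eq_sum_Iic, this]

theorem sum_Ioi_castSucc [AddCommMonoid A] (y : Fin (m + 1) → A) (i : Fin m) :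
    ∑ j ∈ Finset.Ioi i.castSucc, y j = y i.succ + ∑ j ∈ Finset.Ioi i.succ, y j := by
  have : Finset.Ioi i.castSucc = Finset.Ici i.succ := by
    ext j
    rw [Finset.mem_Ioi, Finset.mem_Ici, Fin.castSucc_lt_iff_succ_le]
  rw [Finset.add_sum_Ioi_eq_sum_Ici, this]

theorem sum_Iic_cons_sub [AddCommGroup A] (g : Fin (m + 1) → A) (k : Fin (m + 1)) :
    ∑ j ∈ Finset.Iic k, (Fin.cons (g 0) fun i => g i.succ - g i.castSucc : Fin (m + 1) → A) j =
      g k := by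
  induction k using Fin.induction with
  | zero => rw [sum_Iic_zero, Fin.cons_zero]
  | succ i ih => rw [sum_Iic_succ, ih, Fin.cons_succ, add_sub_cancel]

/-- The bijection sending a vector to the sequence of its partial sums; its inverse takes successive
differences. -/
def prefixSum [AddCommGroup A] : (Fin (m + 1) → A) ≃ (Fin (m + 1) → A) where
  toFun y k := ∑ j ∈ Finset.Iic k, y j
  invFun g := Fin.cons (g 0) fun i => g i.succ - g i.castSucc
  left_inv y := by
    ext k
    cases k using Fin.cases with
    | zero => exact sum_Iic_zero y
    | succ i => exact sub_eq_of_eq_add' (sum_Iic_succ y i)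
  right_inv g := funext (sum_Iic_cons_sub g)

end PrefixSum

section LatticePoints

variable {m : ℕ}

/-- The partial sums by which `x` falls short of the staircase `(n, n - 1, …, 1)`, `n = m + 1`. The
staircase is the vertex of `P_n(132,312)` all of whose entries are left-to-right minima. -/
def deficit (R : Type*) [Ring R] (m : ℕ) : (Fin (m + 1) → R) ≃ (Fin (m + 1) → R) :=
  (Equiv.subLeft fun j : Fin (m + 1) => (m + 1 - j : R)).trans prefixSum

theorem deficit_apply (R : Type*) [Ring R] (x : Fin (m + 1) → R) (k : Fin (m + 1)) :
    deficit R m x k = ∑ j ∈ Finset.Iic k, (m + 1 - j - x j) := rfl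

theorem deficit_recordMap (e : Fin (m + 1) → ℝ) (k : Fin (m + 1)) :
    deficit ℝ m (recordMap (m + 1) e) k = (k + 1) * ∑ i ∈ Finset.Ioi k, e i := by
  simp only [deficit_apply, recordMap_apply]
  induction k using Fin.induction with
  | zero =>
    rw [sum_Iic_zero]
    push_cast [Fin.val_zero]
    ring
  | succ i ih =>
    rw [sum_Iic_succ, ih, sum_Ioi_castSucc]
    push_cast [Fin.val_castSucc, Fin.val_succ]
    ring

theorem deficit_recordMap_mem_slopeChains_iff {e : Fin (m + 1) → ℝ} :
    deficit ℝ m (recordMap (m + 1) e) ∈ slopeChains ℝ m 0 ↔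
      ∀ i : Fin m, e i.succ ∈ Set.Ioo 0 1 := by
  have hlast : deficit ℝ m (recordMap (m + 1) e) (Fin.last m) = 0 := by
    rw [deficit_recordMap, ← Fin.top_eq_last, Finset.Ioi_top, Finset.sum_empty, mul_zero]
  refine (and_iff_right hlast).trans (forall_congr' fun i => ?_)
  have hpos : (0 : ℝ) < (i + 1) * (i + 2) := by positivity
  have hstep : (i + 2) * deficit ℝ m (recordMap (m + 1) e) i.castSucc =
      (i + 1) * deficit ℝ m (recordMap (m + 1) e) i.succ + (i + 1) * (i + 2) * e i.succ := by
    rw [deficit_recordMap, deficit_recordMap, sum_Ioi_castSucc]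
    push_cast [Fin.val_castSucc, Fin.val_succ]
    ring
  rw [hstep, Set.mem_Ioo, Set.mem_Ioo, lt_add_iff_pos_right, add_lt_add_iff_left,
    mul_pos_iff_of_pos_left hpos, mul_lt_iff_lt_one_right hpos]

theorem exists_recordMap_eq {x : Fin (m + 1) → ℝ} (hx : deficit ℝ m x (Fin.last m) = 0) (a : ℝ) :
    ∃ e, e 0 = a ∧ recordMap (m + 1) e = x := by
  let g := deficit ℝ m x
  let e : Fin (m + 1) → ℝ := Fin.cons a fun i => g i.castSucc / (i + 1) - g i.succ / (i + 2)
  have htail (k : Fin (m + 1)) : ∑ i ∈ Finset.Ioi k, e i = g k / (k + 1) := by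
    induction k using Fin.reverseInduction with
    | last => rw [show g (Fin.last m) = 0 from hx, zero_div, ← Fin.top_eq_last, Finset.Ioi_top,
        Finset.sum_empty]
    | cast i ih =>
      have he : e i.succ = g i.castSucc / (i + 1) - g i.succ / (i + 2) := rfl
      rw [sum_Ioi_castSucc, ih, he, Fin.val_castSucc, Fin.val_succ, Nat.cast_succ,
        add_assoc (i : ℝ), one_add_one_eq_two, sub_add_cancel]
  refine ⟨e, rfl, (deficit ℝ m).injective (funext fun k => ?_)⟩
  rw [deficit_recordMap, htail, mul_div_cancel₀ _ (by positivity)]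

theorem mem_image_recordMap_iff {x : Fin (m + 1) → ℝ} :
    x ∈ recordMap (m + 1) '' Set.univ.pi (fun _ => Set.Ioo 0 1) ↔
      deficit ℝ m x ∈ slopeChains ℝ m 0 := by
  constructor
  · rintro ⟨e, he, rfl⟩
    exact deficit_recordMap_mem_slopeChains_iff.2 fun i => he i.succ trivial
  · intro hx
    obtain ⟨e, he, rfl⟩ := exists_recordMap_eq hx.1 (1 / 2)
    refine ⟨e, fun i _ => ?_, rfl⟩
    cases i using Fin.cases with
    | zero => norm_num [he]
    | succ i => exact deficit_recordMap_mem_slopeChains_iff.1 hx i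

theorem intrinsicInterior_P132312 (n : ℕ) :
    intrinsicInterior ℝ (P132312 n) = recordMap n '' Set.univ.pi fun _ => Set.Ioo 0 1 := by
  have hint : interior (Set.univ.pi fun _ => Set.Icc 0 1 : Set (Fin n → ℝ)) =
      Set.univ.pi fun _ => Set.Ioo 0 1 := by
    simp only [interior_pi_set Set.finite_univ, interior_Icc]
  have hne : (interior (Set.univ.pi fun _ => Set.Icc 0 1 : Set (Fin n → ℝ))).Nonempty :=
    hint ▸ Set.univ_pi_nonempty_iff.2 fun _ => Set.nonempty_Ioo.2 one_pos
  rw [P132312_eq_image,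
    intrinsicInterior_image_of_convex _ (convex_pi fun _ _ => convex_Icc 0 1) hne, hint]

theorem deficit_intCast_mem_slopeChains_iff {x : Fin (m + 1) → ℤ} :
    deficit ℝ m (fun i => (x i : ℝ)) ∈ slopeChains ℝ m 0 ↔ deficit ℤ m x ∈ slopeChains ℤ m 0 := by
  have hcast (k : Fin (m + 1)) : deficit ℝ m (fun i => (x i : ℝ)) k = (deficit ℤ m x k : ℤ) := by
    simp only [deficit_apply]
    push_cast
    rfl
  simp only [slopeChains, Set.mem_ofPred_eq, hcast, Set.mem_Ioo]
  norm_cast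

theorem setOf_mem_intrinsicInterior_P132312 (m : ℕ) :
    {x : Fin (m + 1) → ℤ | (fun i => (x i : ℝ)) ∈ intrinsicInterior ℝ (P132312 (m + 1))} =
      deficit ℤ m ⁻¹' slopeChains ℤ m 0 := by
  ext x
  rw [Set.mem_ofPred_eq, intrinsicInterior_P132312, mem_image_recordMap_iff,
    deficit_intCast_mem_slopeChains_iff, Set.mem_preimage]

end LatticePoints

theorem ncard_derangements_fin (n : ℕ) :
    Set.ncard {τ : Equiv.Perm (Fin n) | ∀ i, τ i ≠ i} = numDerangements n := by
  rw [← card_derangements_fin_eq_numDerangements, ← Nat.card_eq_fintype_card]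
  rfl

theorem stmt4 (n : ℕ) (hn : 1 ≤ n) :
    Set.ncard {x : Fin n → ℤ | (fun i => (x i : ℝ)) ∈ intrinsicInterior ℝ (P132312 n)} =
      Set.ncard {τ : Equiv.Perm (Fin (n - 1)) | ∀ i, τ i ≠ i} := by
  obtain ⟨m, rfl⟩ := Nat.exists_eq_add_of_le' hn
  rw [setOf_mem_intrinsicInterior_P132312, Set.ncard,
    Set.encard_preimage_of_bijective (deficit ℤ m).bijective, encard_slopeChains,
    if_pos (dvd_zero _), ENat.toNat_natCast, Nat.add_sub_cancel, ncard_derangements_fin]
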